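/- arXiv:0910.2013 — 2 statements merged into one kernel-verified Lean document; each statement's English description precedes it below -/
import Mathlib

section
/- Suppose φ''_F > 0 and φ''_{2F} ≠ 0. Then there exist N₀ ∈ ℕ and constants C₁ ≥ C₂ > 0 (depending only on φ''_F and φ''_{2F}) such that for all integers N ≥ N₀ and all integers K with 2 ≤ K ≤ N/2, −C₁ N^{1/2} ≤ inf{ ⟨L^qcf v, v⟩ : v ∈ U, ‖v'‖_{ℓ²_ε} = 1 } ≤ −C₂ N^{1/2}. In particular, for N large the operator L^qcf is not positive definite. -/
/-!
Write `v''` for the undivided second difference `v (j+1) - 2 v j + v (j-1)`. The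
next-nearest-neighbour force differs from its Cauchy–Born approximation by a fourth difference,
so summation by parts gives, with `S = ∑ (v ℓ - v (ℓ-1))²`,
`⟨L v, v⟩ = N (A_F S - φ2F T)`, where `T = ∑_{|j| ≤ K} (v'')'' j * v j`.
A discrete Green identity turns `T` into `∑_{|j| ≤ K} (v'' j)²` plus two interface terms, one at
`K` and one at `-K`, each of the form `v'' * v`.

If `N S = 1`, then `|v| ≤ √2` by Cauchy–Schwarz while `|v''| ≤ 2 / √N`, so the interface terms
contribute at most `O(√N)`, and everything else is `O(1)`; this is the lower bound.
The order `√N` is attained by a hat function, which is of order one at the interface, plus a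
spike of height `± 1 / √N` at the continuum site `K + 2`: the spike has energy `O(1)`, and
the atomistic stencil sees it only at `j = K`, which produces the interface term `± v K / √N`
with no competing quadratic term (all up to normalization).
-/

open Finset

noncomputable section

/-- lattice spacing ε = 1/N -/
def eps (N : ℕ) : ℝ := 1 / N

/-- membership in the displacement space U -/
def memU (N : ℕ) (u : ℤ → ℝ) : Prop :=
  ∀ j : ℤ, ((N : ℤ) ≤ j ∨ j ≤ -(N : ℤ)) → u j = 0

/-- backward first difference -/
def D1 (N : ℕ) (u : ℤ → ℝ) (ℓ : ℤ) : ℝ := (u ℓ - u (ℓ - 1)) / eps N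

/-- ‖u'‖²_{ℓ²_ε} -/
def dnormSq (N : ℕ) (u : ℤ → ℝ) : ℝ :=
  eps N * ∑ ℓ ∈ Icc (-(N : ℤ) + 1) (N : ℤ), (D1 N u ℓ) ^ 2

/-- the linearized force-based quasicontinuum operator (L^qcf v)_j :
atomistic forces for |j| ≤ K, continuum (Cauchy–Born) forces for K < |j| ≤ N−1,
and 0 at j = ±N. -/
def lqcfFun (N K : ℕ) (φF φ2F : ℝ) (v : ℤ → ℝ) (j : ℤ) : ℝ :=
  if -(N : ℤ) + 1 ≤ j ∧ j ≤ (N : ℤ) - 1 then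
    if -(K : ℤ) ≤ j ∧ j ≤ (K : ℤ) then
      φF * (-v (j + 1) + 2 * v j - v (j - 1)) / (eps N) ^ 2
        + φ2F * (-v (j + 2) + 2 * v j - v (j - 2)) / (eps N) ^ 2
    else
      (φF + 4 * φ2F) * (-v (j + 1) + 2 * v j - v (j - 1)) / (eps N) ^ 2
  else 0

/-- the quadratic form ⟨L^qcf v, v⟩ -/
def qformQcf (N K : ℕ) (φF φ2F : ℝ) (v : ℤ → ℝ) : ℝ :=
  eps N * ∑ ℓ ∈ Icc (-(N : ℤ) + 1) (N : ℤ), lqcfFun N K φF φ2F v ℓ * v ℓ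

/-! ### Summation by parts -/

/-- The second difference of `v`, not divided by `ε²`. -/
def secDiff (v : ℤ → ℝ) (j : ℤ) : ℝ := v (j + 1) - 2 * v j + v (j - 1)

/-- The sum of squared increments, `ε ‖v'‖²`. -/
def incSq (N : ℕ) (v : ℤ → ℝ) : ℝ :=
  ∑ ℓ ∈ Icc (-(N : ℤ) + 1) (N : ℤ), (v ℓ - v (ℓ - 1)) ^ 2

/-- The pairing of `v` with its (unscaled) fourth difference over the atomistic region. -/
def fourthPair (K : ℕ) (v : ℤ → ℝ) : ℝ :=
  ∑ j ∈ Icc (-(K : ℤ)) (K : ℤ), secDiff (secDiff v) j * v j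

/-- The discrete Wronskian of `v` and its second difference on the bond `(j - 1, j)`: the boundary
term in Green's identity. -/
def wronsk (v : ℤ → ℝ) (j : ℤ) : ℝ := secDiff v j * v (j - 1) - secDiff v (j - 1) * v j

lemma sum_Icc_telescope (G : ℤ → ℝ) (a b : ℤ) (h : a ≤ b + 1) :
    ∑ j ∈ Icc a b, (G (j + 1) - G j) = G (b + 1) - G a := by
  obtain ⟨c, rfl⟩ : ∃ c, b = c - 1 := ⟨b + 1, by ring⟩
  simp only [sub_add_cancel] at *
  induction c, h using Int.leInduction with
  | base => simp
  | succ n hn ih =>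
    have : Icc a (n + 1 - 1) = insert n (Icc a (n - 1)) := by
      ext x; simp only [mem_Icc, mem_insert]; omega
    rw [this, sum_insert (by simp), ih]
    ring

lemma dnormSq_eq (N : ℕ) (hN : 0 < N) (v : ℤ → ℝ) : dnormSq N v = N * incSq N v := by
  have : (N : ℝ) ≠ 0 := by positivity
  unfold dnormSq incSq D1 eps
  rw [mul_sum, mul_sum]
  refine sum_congr rfl fun j _ => ?_
  field_simp

lemma sum_neg_secDiff_mul (N : ℕ) (v : ℤ → ℝ) (hv : memU N v) :
    ∑ j ∈ Icc (-(N : ℤ) + 1) (N : ℤ), -secDiff v j * v j = incSq N v := by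
  have h := sum_Icc_telescope (fun j => -((v j - v (j - 1)) * v (j - 1)))
    (-(N : ℤ) + 1) N (by omega)
  have h1 : v N = 0 := hv _ (by omega)
  have h2 : v (-(N : ℤ)) = 0 := hv _ (by omega)
  simp only [add_sub_cancel_right, h1, h2, mul_zero, neg_zero, sub_zero] at h
  rw [← sub_eq_zero, incSq, ← sum_sub_distrib, ← h]
  refine sum_congr rfl fun j _ => ?_
  unfold secDiff
  ring

lemma qformQcf_eq (N K : ℕ) (hN : 0 < N) (hK : K < N) (φF φ2F : ℝ) (v : ℤ → ℝ)
    (hv : memU N v) :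
    qformQcf N K φF φ2F v
      = N * ((φF + 4 * φ2F) * incSq N v - φ2F * fourthPair K v) := by
  have hN0 : (N : ℝ) ≠ 0 := by positivity
  have hT : fourthPair K v = ∑ j ∈ Icc (-(N : ℤ) + 1) (N : ℤ),
      if -(K : ℤ) ≤ j ∧ j ≤ (K : ℤ) then secDiff (secDiff v) j * v j else 0 := by
    rw [← sum_filter, fourthPair]
    refine sum_congr ?_ fun _ _ => rfl
    ext x; simp only [mem_Icc, mem_filter]; omega
  rw [← sum_neg_secDiff_mul N v hv, hT, qformQcf, mul_sum, mul_sum, mul_sum,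
    ← sum_sub_distrib, mul_sum]
  refine sum_congr rfl fun j hj => ?_
  rw [mem_Icc] at hj
  unfold lqcfFun eps
  by_cases hjN : j = N
  · have h1 : v j = 0 := hv _ (by omega)
    simp [h1]
  · rw [if_pos (by omega)]
    have e1 : j + 1 + 1 = j + 2 := by ring
    have e2 : j - 1 - 1 = j - 2 := by ring
    split_ifs
    · simp only [secDiff, e1, e2, add_sub_cancel_right, sub_add_cancel]
      field_simp
      ring
    · simp only [secDiff]
      field_simp
      ring

/-- Discrete Green identity on the atomistic region. -/
lemma fourthPair_eq (K : ℕ) (v : ℤ → ℝ) :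
    fourthPair K v = ∑ j ∈ Icc (-(K : ℤ)) (K : ℤ), secDiff v j ^ 2
      + (wronsk v (K + 1) - wronsk v (-(K : ℤ))) := by
  rw [← sum_Icc_telescope (wronsk v) (-(K : ℤ)) K (by omega), ← sum_add_distrib, fourthPair]
  refine sum_congr rfl fun j _ => ?_
  simp only [wronsk, secDiff, add_sub_cancel_right, sub_add_cancel]
  ring

/-! ### Lower bound -/

lemma sq_inc_le (N : ℕ) (v : ℤ → ℝ) (ℓ : ℤ) (h1 : -(N : ℤ) + 1 ≤ ℓ) (h2 : ℓ ≤ N) :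
    (v ℓ - v (ℓ - 1)) ^ 2 ≤ incSq N v :=
  single_le_sum (f := fun ℓ : ℤ => (v ℓ - v (ℓ - 1)) ^ 2) (fun _ _ => sq_nonneg _)
    (mem_Icc.2 ⟨h1, h2⟩)

lemma sq_le_incSq (N : ℕ) (v : ℤ → ℝ) (hv : memU N v) (j : ℤ) (h1 : -(N : ℤ) ≤ j)
    (h2 : j ≤ N) : v j ^ 2 ≤ 2 * N * incSq N v := by
  have h := sum_Icc_telescope (fun i => v (i - 1)) (-(N : ℤ) + 1) j (by omega)
  simp only [add_sub_cancel_right] at h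
  rw [hv (-(N : ℤ)) (by omega), sub_zero] at h
  rw [← h]
  refine sq_sum_le_card_mul_sum_sq.trans ?_
  have hS : ∑ i ∈ Icc (-(N : ℤ) + 1) j, (v i - v (i - 1)) ^ 2 ≤ incSq N v :=
    sum_le_sum_of_subset_of_nonneg (Icc_subset_Icc le_rfl h2) fun _ _ _ => sq_nonneg _
  have hc : ((#(Icc (-(N : ℤ) + 1) j) : ℕ) : ℝ) ≤ 2 * N := by
    rw [Int.card_Icc]
    have : (j + 1 - (-(N : ℤ) + 1)).toNat ≤ 2 * N := by omega
    exact_mod_cast this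
  exact mul_le_mul hc hS (sum_nonneg fun _ _ => sq_nonneg _) (by positivity)

lemma sq_secDiff_le (N : ℕ) (v : ℤ → ℝ) (j : ℤ) (h1 : -(N : ℤ) + 1 ≤ j)
    (h2 : j + 1 ≤ N) : secDiff v j ^ 2 ≤ 4 * incSq N v := by
  have a := sq_inc_le N v j h1 (by omega)
  have b := sq_inc_le N v (j + 1) (by omega) h2
  rw [add_sub_cancel_right] at b
  unfold secDiff
  nlinarith [sq_nonneg ((v (j + 1) - v j) + (v j - v (j - 1)))]

lemma sum_sq_secDiff_le (N K : ℕ) (hK : K < N) (v : ℤ → ℝ) :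
    ∑ j ∈ Icc (-(K : ℤ)) (K : ℤ), secDiff v j ^ 2 ≤ 4 * incSq N v := by
  have h1 : ∑ j ∈ Icc (-(K : ℤ)) (K : ℤ), (v j - v (j - 1)) ^ 2 ≤ incSq N v :=
    sum_le_sum_of_subset_of_nonneg (Icc_subset_Icc (by omega) (by omega))
      fun _ _ _ => sq_nonneg _
  have h2 : ∑ j ∈ Icc (-(K : ℤ)) (K : ℤ), (v (j + 1) - v j) ^ 2 ≤ incSq N v := by
    have : ∑ j ∈ Icc (-(K : ℤ)) (K : ℤ), (v (j + 1) - v j) ^ 2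
        = ∑ j ∈ Icc (-(K : ℤ) + 1) (K + 1 : ℤ), (v j - v (j - 1)) ^ 2 := by
      refine sum_bij (fun j _ => j + 1) ?_ ?_ ?_ ?_
      · intro j hj; simp only [mem_Icc] at *; omega
      · intro a _ b _ h; omega
      · intro b hb; refine ⟨b - 1, ?_, by ring⟩; simp only [mem_Icc] at *; omega
      · intro j _; simp
    rw [this]
    exact sum_le_sum_of_subset_of_nonneg (Icc_subset_Icc (by omega) (by omega))
      fun _ _ _ => sq_nonneg _
  calc ∑ j ∈ Icc (-(K : ℤ)) (K : ℤ), secDiff v j ^ 2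
      ≤ ∑ j ∈ Icc (-(K : ℤ)) (K : ℤ), (2 * (v (j + 1) - v j) ^ 2 + 2 * (v j - v (j - 1)) ^ 2) := by
        refine sum_le_sum fun j _ => ?_
        unfold secDiff
        nlinarith [sq_nonneg ((v (j + 1) - v j) + (v j - v (j - 1)))]
    _ = 2 * ∑ j ∈ Icc (-(K : ℤ)) (K : ℤ), (v (j + 1) - v j) ^ 2
        + 2 * ∑ j ∈ Icc (-(K : ℤ)) (K : ℤ), (v j - v (j - 1)) ^ 2 := by
        rw [sum_add_distrib, mul_sum, mul_sum]
    _ ≤ 4 * incSq N v := by linarith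

lemma abs_wronsk_le (N : ℕ) (hN : 0 < N) (v : ℤ → ℝ) (hv : memU N v)
    (hS : N * incSq N v = 1) (j : ℤ) (h1 : -(N : ℤ) + 2 ≤ j) (h2 : j + 1 ≤ N) :
    |wronsk v j| * √N ≤ 8 := by
  have hr : (√(N : ℝ)) ^ 2 = N := Real.sq_sqrt (by positivity)
  have hv' : ∀ i : ℤ, -(N : ℤ) ≤ i → i ≤ N → |v i| ≤ 2 := fun i a b => by
    have := sq_le_incSq N v hv i a b
    exact abs_le_of_sq_le_sq (by nlinarith) (by norm_num)
  have hb : ∀ i : ℤ, -(N : ℤ) + 1 ≤ i → i + 1 ≤ N → |secDiff v i| * √N ≤ 2 := fun i a b => by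
    have h := sq_secDiff_le N v i a b
    rw [← abs_of_nonneg (Real.sqrt_nonneg (N : ℝ)), ← abs_mul]
    refine abs_le_of_sq_le_sq ?_ (by norm_num)
    rw [mul_pow, hr]
    have : (0 : ℝ) ≤ N := by positivity
    nlinarith
  have t1 : |wronsk v j| ≤ |secDiff v j| * |v (j - 1)| + |secDiff v (j - 1)| * |v j| := by
    rw [← abs_mul, ← abs_mul]; exact abs_sub _ _
  have m1 := mul_le_mul (hb j (by omega) h2) (hv' (j - 1) (by omega) (by omega))
    (abs_nonneg _) (by norm_num)
  have m2 := mul_le_mul (hb (j - 1) (by omega) (by omega)) (hv' j (by omega) (by omega))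
    (abs_nonneg _) (by norm_num)
  have := mul_le_mul_of_nonneg_right t1 (Real.sqrt_nonneg (N : ℝ))
  linarith

lemma qformQcf_lower (N K : ℕ) (hK : 2 ≤ K) (hKN : 2 * K ≤ N) (φF φ2F : ℝ)
    (v : ℤ → ℝ) (hv : memU N v) (h : dnormSq N v = 1) :
    -(|φF + 4 * φ2F| + 20 * |φ2F|) * √N ≤ qformQcf N K φF φ2F v := by
  have hN : 0 < N := by omega
  rw [dnormSq_eq N hN] at h
  rw [qformQcf_eq N K hN (by omega) φF φ2F v hv]
  have hr : √(N : ℝ) * √N = N := Real.mul_self_sqrt (by positivity)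
  have hr1 : 1 ≤ √(N : ℝ) := by
    rw [Real.one_le_sqrt]; exact_mod_cast hN
  have w1 := abs_wronsk_le N hN v hv h (K + 1) (by omega) (by omega)
  have w2 := abs_wronsk_le N hN v hv h (-(K : ℤ)) (by omega) (by omega)
  have b1 := sum_sq_secDiff_le N K (by omega) v
  have b0 : 0 ≤ ∑ j ∈ Icc (-(K : ℤ)) (K : ℤ), secDiff v j ^ 2 := sum_nonneg fun _ _ => sq_nonneg _
  have hT : N * |fourthPair K v| ≤ 20 * √N := by
    have t : |fourthPair K v| ≤ 4 * incSq N v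
        + (|wronsk v (K + 1)| + |wronsk v (-(K : ℤ))|) := by
      rw [fourthPair_eq]
      refine (abs_add_le _ _).trans (add_le_add ?_ (abs_sub _ _))
      rwa [abs_of_nonneg b0]
    have t2 := mul_le_mul_of_nonneg_left t (Nat.cast_nonneg (α := ℝ) N)
    have t3 := mul_le_mul_of_nonneg_right w1 (Real.sqrt_nonneg (N : ℝ))
    have t4 := mul_le_mul_of_nonneg_right w2 (Real.sqrt_nonneg (N : ℝ))
    rw [mul_assoc, hr] at t3 t4
    linarith
  have e : (N : ℝ) * ((φF + 4 * φ2F) * incSq N v - φ2F * fourthPair K v)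
      = (φF + 4 * φ2F) - φ2F * (N * fourthPair K v) := by linear_combination (φF + 4 * φ2F) * h
  have p1 : |φ2F * (N * fourthPair K v)| ≤ |φ2F| * (20 * √N) := by
    rw [abs_mul, abs_mul, Nat.abs_cast]
    exact mul_le_mul_of_nonneg_left hT (abs_nonneg _)
  have p2 := le_abs_self (φ2F * (N * fourthPair K v))
  have p3 := neg_abs_le (φF + 4 * φ2F)
  have p4 := mul_le_mul_of_nonneg_left hr1 (abs_nonneg (φF + 4 * φ2F))
  rw [e]
  linarith

/-! ### The hat with a spike -/

/-- Half of a unit hat on `[-N, N]` plus a spike of height `σ` at the site `K + 2`. The factor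
one half normalizes the discrete `H¹` seminorm when `σ² = 1 / N`. -/
def testFn (N K : ℕ) (σ : ℝ) (j : ℤ) : ℝ :=
  ((if |j| < N then 1 - |(j : ℝ)| / N else 0) + if j = K + 2 then σ else 0) / 2

lemma memU_testFn (N K : ℕ) (σ : ℝ) (hK : K + 3 ≤ N) : memU N (testFn N K σ) := by
  intro j hj
  unfold testFn
  rw [if_neg (by rw [abs_lt]; omega), if_neg (by omega)]
  norm_num

lemma testFn_of_nonneg (N K : ℕ) (σ : ℝ) (hN : 0 < N) (j : ℤ) (h0 : 0 ≤ j) (h1 : j ≤ N) :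
    testFn N K σ j = ((1 - (j : ℝ) / N) + if j = K + 2 then σ else 0) / 2 := by
  have : (N : ℝ) ≠ 0 := by positivity
  have h0' : (0 : ℝ) ≤ j := by exact_mod_cast h0
  unfold testFn
  rcases h1.lt_or_eq with h | h
  · rw [if_pos (by rw [abs_lt]; omega), abs_of_nonneg h0']
  · rw [if_neg (by rw [abs_lt]; omega)]
    subst h
    simp [this]

lemma testFn_of_nonpos (N K : ℕ) (σ : ℝ) (hN : 0 < N) (j : ℤ) (h0 : j ≤ 0) (h1 : -(N : ℤ) ≤ j) :
    testFn N K σ j = (1 + (j : ℝ) / N) / 2 := by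
  have : (N : ℝ) ≠ 0 := by positivity
  have h0' : (j : ℝ) ≤ 0 := by exact_mod_cast h0
  unfold testFn
  rw [if_neg (show ¬ j = K + 2 by omega)]
  rcases h1.lt_or_eq with h | h
  · rw [if_pos (by rw [abs_lt]; omega), abs_of_nonpos h0']
    ring
  · rw [if_neg (by rw [abs_lt]; omega), ← h]
    push_cast
    field_simp
    ring

lemma incSq_testFn (N K : ℕ) (σ : ℝ) (hK : K + 3 ≤ N) :
    incSq N (testFn N K σ) = (1 / N + σ ^ 2) / 2 := by
  have hN : 0 < N := by omega
  have hN0 : (N : ℝ) ≠ 0 := by positivity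
  -- The cross terms at the two bonds touching the spike cancel.
  have key : ∀ ℓ ∈ Icc (-(N : ℤ) + 1) (N : ℤ),
      (testFn N K σ ℓ - testFn N K σ (ℓ - 1)) ^ 2
        = 1 / (4 * N ^ 2) + ((if ℓ = (K + 2 : ℤ) then (σ ^ 2 - 2 * σ / N) / 4 else 0)
          + if ℓ = (K + 3 : ℤ) then (σ ^ 2 + 2 * σ / N) / 4 else 0) := by
    intro ℓ hℓ
    rw [mem_Icc] at hℓ
    by_cases h : 1 ≤ ℓ
    · rw [testFn_of_nonneg N K σ hN ℓ (by omega) (by omega),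
        testFn_of_nonneg N K σ hN (ℓ - 1) (by omega) (by omega)]
      have e : (ℓ - 1 = (K + 2 : ℤ)) ↔ ℓ = K + 3 := by omega
      simp only [e]
      push_cast
      split_ifs
      · omega
      all_goals
        field_simp
        ring
    · rw [testFn_of_nonpos N K σ hN ℓ (by omega) (by omega),
        testFn_of_nonpos N K σ hN (ℓ - 1) (by omega) (by omega),
        if_neg (by omega), if_neg (by omega)]
      push_cast
      field_simp
      ring
  rw [incSq, sum_congr rfl key, sum_add_distrib, sum_add_distrib, sum_ite_eq', sum_ite_eq',
    if_pos (by rw [mem_Icc]; omega), if_pos (by rw [mem_Icc]; omega), sum_const, Int.card_Icc]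
  have : ((N : ℤ) + 1 - (-(N : ℤ) + 1)).toNat = 2 * N := by omega
  rw [this, nsmul_eq_mul]
  push_cast
  field_simp
  ring

lemma secDiff_testFn (N K : ℕ) (σ : ℝ) (hK : K + 3 ≤ N) (j : ℤ)
    (h1 : -(K : ℤ) - 1 ≤ j) (h2 : j ≤ K + 1) :
    secDiff (testFn N K σ) j
      = (if j = 0 then -1 / (N : ℝ) else 0) + if j = (K + 1 : ℤ) then σ / 2 else 0 := by
  have hN : 0 < N := by omega
  have hN0 : (N : ℝ) ≠ 0 := by positivity
  unfold secDiff
  rcases lt_trichotomy j 0 with h | h | h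
  · rw [testFn_of_nonpos N K σ hN (j + 1) (by omega) (by omega),
      testFn_of_nonpos N K σ hN j (by omega) (by omega),
      testFn_of_nonpos N K σ hN (j - 1) (by omega) (by omega),
      if_neg (by omega), if_neg (by omega)]
    push_cast
    ring
  · subst h
    rw [testFn_of_nonneg N K σ hN (0 + 1) (by omega) (by omega),
      testFn_of_nonpos N K σ hN 0 (by omega) (by omega),
      testFn_of_nonpos N K σ hN (0 - 1) (by omega) (by omega),
      if_neg (by omega), if_pos rfl, if_neg (by omega)]
    push_cast
    ring
  · rw [testFn_of_nonneg N K σ hN (j + 1) (by omega) (by omega),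
      testFn_of_nonneg N K σ hN j (by omega) (by omega),
      testFn_of_nonneg N K σ hN (j - 1) (by omega) (by omega),
      if_neg (show ¬ j = K + 2 by omega), if_neg (show ¬ j - 1 = K + 2 by omega),
      if_neg (show ¬ j = 0 by omega)]
    have e : (j + 1 = (K + 2 : ℤ)) ↔ j = K + 1 := by omega
    simp only [e]
    push_cast
    split_ifs <;> ring

lemma fourthPair_testFn (N K : ℕ) (σ : ℝ) (h2K : 2 ≤ K) (hK : K + 3 ≤ N) :
    fourthPair K (testFn N K σ) = 1 / N ^ 2 + σ * (1 - K / N) / 4 := by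
  have hN : 0 < N := by omega
  have hsum : ∑ j ∈ Icc (-(K : ℤ)) (K : ℤ), secDiff (testFn N K σ) j ^ 2 = 1 / (N : ℝ) ^ 2 := by
    have : ∀ j ∈ Icc (-(K : ℤ)) (K : ℤ), secDiff (testFn N K σ) j ^ 2
        = if j = 0 then 1 / (N : ℝ) ^ 2 else 0 := by
      intro j hj
      rw [mem_Icc] at hj
      rw [secDiff_testFn N K σ hK j (by omega) (by omega), if_neg (show ¬ j = K + 1 by omega)]
      split_ifs
      · rw [add_zero, div_pow]; norm_num
      · norm_num
    rw [sum_congr rfl this, sum_ite_eq', if_pos (by rw [mem_Icc]; omega)]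
  rw [fourthPair_eq, hsum, wronsk, wronsk, add_sub_cancel_right,
    secDiff_testFn N K σ hK (K + 1) (by omega) (by omega),
    secDiff_testFn N K σ hK K (by omega) (by omega),
    secDiff_testFn N K σ hK (-(K : ℤ)) (by omega) (by omega),
    secDiff_testFn N K σ hK (-(K : ℤ) - 1) (by omega) (by omega),
    testFn_of_nonneg N K σ hN K (by omega) (by omega),
    if_neg (show ¬ (K + 1 : ℤ) = 0 by omega), if_pos rfl,
    if_neg (show ¬ (K : ℤ) = 0 by omega), if_neg (show ¬ (K : ℤ) = K + 1 by omega),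
    if_neg (show ¬ -(K : ℤ) = 0 by omega), if_neg (show ¬ -(K : ℤ) = K + 1 by omega),
    if_neg (show ¬ -(K : ℤ) - 1 = 0 by omega), if_neg (show ¬ -(K : ℤ) - 1 = K + 1 by omega),
    if_neg (show ¬ (K : ℤ) = K + 2 by omega)]
  push_cast
  ring

/-- Choosing the sign of the spike to agree with that of `φ2F` makes the form of order `-√N`. -/
lemma exists_qformQcf_le (N K : ℕ) (hK : 2 ≤ K) (hKN : 2 * K ≤ N) (hN6 : 6 ≤ N) (φF φ2F : ℝ)
    (hN : 16 * (|φF + 4 * φ2F| + |φ2F|) ≤ |φ2F| * √N) :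
    ∃ v, memU N v ∧ dnormSq N v = 1 ∧ qformQcf N K φF φ2F v ≤ -(|φ2F| / 16) * √N := by
  obtain ⟨s, hs, hsφ⟩ : ∃ s : ℝ, s ^ 2 = 1 ∧ φ2F * s = |φ2F| := by
    rcases le_total 0 φ2F with h | h
    · exact ⟨1, by norm_num, by rw [abs_of_nonneg h]; ring⟩
    · exact ⟨-1, by norm_num, by rw [abs_of_nonpos h]; ring⟩
  have hK3 : K + 3 ≤ N := by omega
  have hNpos : 0 < N := by omega
  have hN0 : (0 : ℝ) < N := by positivity
  have hr0 : 0 < √(N : ℝ) := Real.sqrt_pos.2 hN0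
  have hr : √(N : ℝ) ^ 2 = N := Real.sq_sqrt hN0.le
  have hS : N * incSq N (testFn N K (s / √N)) = 1 := by
    rw [incSq_testFn N K _ hK3, div_pow, hr, hs]
    field_simp
    norm_num
  refine ⟨testFn N K (s / √N), memU_testFn N K _ hK3, by rw [dnormSq_eq N hNpos, hS], ?_⟩
  rw [qformQcf_eq N K hNpos (by omega) φF φ2F _ (memU_testFn N K _ hK3),
    fourthPair_testFn N K _ hK hK3]
  have e1 : (N : ℝ) * (s / √N) = s * √N := by
    nth_rewrite 1 [← hr]
    field_simp
  have e : (N : ℝ) * ((φF + 4 * φ2F) * incSq N (testFn N K (s / √N))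
      - φ2F * (1 / N ^ 2 + s / √N * (1 - K / N) / 4))
      = (φF + 4 * φ2F) - φ2F * (1 / N) - |φ2F| * √N * (1 - K / N) / 4 := by
    have e2 : (N : ℝ) * (1 / N ^ 2) = 1 / N := by field_simp
    linear_combination (φF + 4 * φ2F) * hS - φ2F * e2 - φ2F * (1 - K / N) / 4 * e1
      - √N * (1 - K / N) / 4 * hsφ
  rw [e]
  have hh : (1 : ℝ) / 2 ≤ 1 - K / N := by
    have : (K : ℝ) / N ≤ 1 / 2 := by
      rw [div_le_div_iff₀ hN0 (by norm_num)]
      have : (2 : ℝ) * K ≤ N := by exact_mod_cast hKN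
      linarith
    linarith
  have p1 := mul_le_mul_of_nonneg_left hh (mul_nonneg (abs_nonneg φ2F) hr0.le)
  have p2 : -(φ2F * (1 / N)) ≤ |φ2F| := by
    have h1 : (1 : ℝ) / N ≤ 1 := by
      rw [div_le_one hN0]; exact_mod_cast hNpos
    have h2 : |φ2F * (1 / N)| ≤ |φ2F| := by
      rw [abs_mul, abs_of_nonneg (a := (1 : ℝ) / N) (by positivity)]
      exact mul_le_of_le_one_right (abs_nonneg _) h1
    exact (neg_le_abs _).trans h2
  have p3 := le_abs_self (φF + 4 * φ2F)
  linarith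

/-- Lack of positive-definiteness of the QCF operator: if φ''_F > 0 and φ''_{2F} ≠ 0,
then there are N₀ ∈ ℕ and constants C₁ ≥ C₂ > 0 such that for all N ≥ N₀ and
2 ≤ K ≤ N/2, −C₁ N^{1/2} ≤ inf{⟨L^qcf v, v⟩ : v ∈ U, ‖v'‖_{ℓ²_ε} = 1} ≤ −C₂ N^{1/2};
in particular L^qcf is not positive definite for such N. -/
theorem stmt3 (φF φ2F : ℝ) (hφF : 0 < φF) (hφ2F : φ2F ≠ 0) :
    ∃ (N₀ : ℕ) (C₁ C₂ : ℝ), C₂ ≤ C₁ ∧ 0 < C₂ ∧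
      ∀ N K : ℕ, N₀ ≤ N → 2 ≤ K → 2 * K ≤ N →
        (-C₁ * Real.sqrt N ≤
            sInf {x : ℝ | ∃ v : ℤ → ℝ, memU N v ∧ dnormSq N v = 1
              ∧ x = qformQcf N K φF φ2F v}
          ∧ sInf {x : ℝ | ∃ v : ℤ → ℝ, memU N v ∧ dnormSq N v = 1
              ∧ x = qformQcf N K φF φ2F v} ≤ -C₂ * Real.sqrt N)
        ∧ ∃ v : ℤ → ℝ, memU N v ∧ qformQcf N K φF φ2F v < 0 := by
  have hφ : 0 < |φ2F| := abs_pos.2 hφ2F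
  set M : ℝ := 16 * (|φF + 4 * φ2F| + |φ2F|) / |φ2F| with hM
  have hM0 : 0 ≤ M := by positivity
  refine ⟨max 6 ⌈M ^ 2⌉₊, |φF + 4 * φ2F| + 20 * |φ2F|, |φ2F| / 16, ?_, by positivity, ?_⟩
  · linarith [abs_nonneg (φF + 4 * φ2F)]
  intro N K hN hK hKN
  have hN6 : 6 ≤ N := (le_max_left _ _).trans hN
  have hMN : M ≤ √N := by
    refine Real.le_sqrt_of_sq_le ((Nat.le_ceil _).trans ?_)
    exact_mod_cast (le_max_right _ _).trans hN
  rw [hM, div_le_iff₀ hφ, mul_comm _ |φ2F|] at hMN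
  obtain ⟨v, hv, hv1, hq⟩ := exists_qformQcf_le N K hK hKN hN6 φF φ2F hMN
  have hlow : ∀ x ∈ {x : ℝ | ∃ v : ℤ → ℝ, memU N v ∧ dnormSq N v = 1
      ∧ x = qformQcf N K φF φ2F v}, -(|φF + 4 * φ2F| + 20 * |φ2F|) * √N ≤ x := by
    rintro x ⟨w, hw, hw1, rfl⟩
    exact qformQcf_lower N K hK hKN φF φ2F w hw hw1
  refine ⟨⟨le_csInf ⟨_, v, hv, hv1, rfl⟩ hlow, ?_⟩, v, hv, hq.trans_lt ?_⟩
  · exact (csInf_le ⟨_, hlow⟩ ⟨v, hv, hv1, rfl⟩).trans hq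
  · have : 0 < √(N : ℝ) := Real.sqrt_pos.2 (by positivity)
    have := mul_pos hφ this
    linarith


end
end

section
/- If 1 ≤ K ≤ N−2 and φ''_{2F} ≤ 0, then inf{ ⟨L^qnl u, u⟩ : u ∈ U, ‖u'‖_{ℓ²_ε} = 1 } = A_F. -/
/-!
The infimum is an attained minimum. Since `φ2F ≤ 0`, the second-difference term is nonnegative,
so the form is at least `A_F = φF + 4 * φ2F` on the unit sphere `dnormSq N u = 1`. Equality holds
for the plateau displacement, constant on `(-N, N)` and zero elsewhere: its strain is
supported on the two end bonds `-N + 1` and `N`, while the second differences in the form involve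
only the bonds `-K, …, K + 1`, which avoid both ends because `K ≤ N - 2`.
-/

open Finset

noncomputable section

/-- the QNL bilinear form
⟨L^qnl u, v⟩ = A_F ε Σ_ℓ u'_ℓ v'_ℓ − φ''_{2F} ε Σ_{ℓ=−K}^{K} (u'_{ℓ+1}−u'_ℓ)(v'_{ℓ+1}−v'_ℓ) -/
def Bqnl (N K : ℕ) (φF φ2F : ℝ) (u v : ℤ → ℝ) : ℝ :=
  (φF + 4 * φ2F) * (eps N * ∑ ℓ ∈ Icc (-(N : ℤ) + 1) (N : ℤ), D1 N u ℓ * D1 N v ℓ)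
    - φ2F * (eps N * ∑ ℓ ∈ Icc (-(K : ℤ)) (K : ℤ),
        (D1 N u (ℓ + 1) - D1 N u ℓ) * (D1 N v (ℓ + 1) - D1 N v ℓ))

/-- The displacement equal to `c` at the interior sites `-N < j < N` and zero elsewhere. -/
def plateau (N : ℕ) (c : ℝ) (j : ℤ) : ℝ := if -(N : ℤ) < j ∧ j < N then c else 0

lemma plateau_memU (N : ℕ) (c : ℝ) : memU N (plateau N c) := by
  intro j hj
  exact if_neg (by omega)

lemma D1_plateau_interior (N : ℕ) (c : ℝ) (l : ℤ) (h1 : -(N : ℤ) + 1 < l) (h2 : l < N) :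
    D1 N (plateau N c) l = 0 := by
  unfold D1 plateau
  rw [if_pos (by omega), if_pos (by omega)]
  simp

lemma D1_plateau_left (N : ℕ) (hN : 2 ≤ N) (c : ℝ) :
    D1 N (plateau N c) (-(N : ℤ) + 1) = c / eps N := by
  unfold D1 plateau
  rw [if_pos (by omega), if_neg (by omega), sub_zero]

lemma D1_plateau_right (N : ℕ) (hN : 2 ≤ N) (c : ℝ) :
    D1 N (plateau N c) N = -c / eps N := by
  unfold D1 plateau
  rw [if_neg (by omega), if_pos (by omega), zero_sub]

lemma eps_pos (N : ℕ) (hN : 2 ≤ N) : 0 < eps N := by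
  unfold eps
  positivity

lemma dnormSq_plateau (N : ℕ) (hN : 2 ≤ N) (c : ℝ) :
    dnormSq N (plateau N c) = 2 * c ^ 2 / eps N := by
  have he := eps_pos N hN
  have hsub : ({-(N : ℤ) + 1, (N : ℤ)} : Finset ℤ) ⊆ Icc (-(N : ℤ) + 1) (N : ℤ) := by
    intro l hl
    simp only [mem_insert, mem_singleton] at hl
    rw [mem_Icc]
    omega
  unfold dnormSq
  rw [← sum_subset hsub, sum_pair (by omega), D1_plateau_left N hN, D1_plateau_right N hN]
  · field_simp
    ring
  · intro l hl hl'
    simp only [mem_insert, mem_singleton, mem_Icc] at hl hl'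
    rw [D1_plateau_interior N c l (by omega) (by omega)]
    simp

lemma Bqnl_self (N K : ℕ) (φF φ2F : ℝ) (u : ℤ → ℝ) :
    Bqnl N K φF φ2F u u = (φF + 4 * φ2F) * dnormSq N u
      - φ2F * (eps N * ∑ l ∈ Icc (-(K : ℤ)) (K : ℤ), (D1 N u (l + 1) - D1 N u l) ^ 2) := by
  simp only [Bqnl, dnormSq, sq]

/-- Stability of the QNL operator: if 1 ≤ K ≤ N−2 and φ''_{2F} ≤ 0, then
inf{⟨L^qnl u, u⟩ : u ∈ U, ‖u'‖_{ℓ²_ε} = 1} = A_F. -/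
theorem stmt6 (N K : ℕ) (hN : 2 ≤ N) (hK1 : 1 ≤ K) (hK2 : (K : ℤ) ≤ (N : ℤ) - 2)
    (φF φ2F : ℝ) (h2F : φ2F ≤ 0) :
    sInf {x : ℝ | ∃ u : ℤ → ℝ, memU N u ∧ dnormSq N u = 1 ∧ x = Bqnl N K φF φ2F u u}
      = φF + 4 * φ2F := by
  apply IsLeast.csInf_eq
  have he := eps_pos N hN
  constructor
  · -- The height `√(ε / 2)` normalizes the plateau's `dnormSq`, which is `2 * c ^ 2 / ε`.
    have hn : dnormSq N (plateau N (√(eps N / 2))) = 1 := by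
      rw [dnormSq_plateau N hN, Real.sq_sqrt (by positivity)]
      field_simp
    refine ⟨_, plateau_memU N _, hn, ?_⟩
    rw [Bqnl_self, hn, sum_eq_zero]
    · ring
    · intro l hl
      rw [mem_Icc] at hl
      rw [D1_plateau_interior N _ l (by omega) (by omega),
        D1_plateau_interior N _ (l + 1) (by omega) (by omega)]
      simp
  · rintro x ⟨u, -, hn, rfl⟩
    rw [Bqnl_self, hn]
    have hs : 0 ≤ eps N * ∑ l ∈ Icc (-(K : ℤ)) (K : ℤ), (D1 N u (l + 1) - D1 N u l) ^ 2 :=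
      mul_nonneg he.le (sum_nonneg fun _ _ => sq_nonneg _)
    linarith [mul_nonpos_of_nonpos_of_nonneg h2F hs]

end
end
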